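/- Let G be a finite group and c ∈ Z²(G, ℂ*) non-degenerate. Then any subgroup H < G that is isotropic with respect to [c] has order dividing √|G|. -/

import Mathlib

/-!
Let `V` be a simple module over the twisted group algebra `ℂᶜG`, of dimension `n`. By Burnside's
theorem the operators `ρ g` by which `G` acts on `V` span `End V`. If `x ≠ 1`, some `ρ g` conjugates
`ρ x` to a multiple `λ • ρ x` with `λ ≠ 1`, so `tr (ρ x) = 0`; testing a linear relation between the
`ρ g` against traces then shows that they are independent. Hence `|G| = dim (End V) = n ^ 2`.

On an isotropic subgroup `H` a rescaling of `ρ` is an ordinary representation, whose character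
vanishes off `1`. The average of this character over `H`, which is `n / |H|`, is the dimension of
the space of `H`-invariants, hence an integer.
-/

section Cocycles

variable {G M : Type*}

/-- The 2-cocycle condition, for `G` acting trivially on the multiplicative coefficients `M`. -/
def IsTwoCocycle [Mul G] [Mul M] (c : G → G → M) : Prop :=
  ∀ g h k : G, c g h * c (g * h) k = c h k * c g (h * k)

/-- The 2-coboundary condition, for `G` acting trivially on the multiplicative coefficients `M`. -/
def IsTwoCoboundary [Mul G] [Group M] (c : G → G → M) : Prop :=
  ∃ f : G → M, ∀ a b : G, c a b = f a * f b * (f (a * b))⁻¹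

/-- Non-degeneracy of a cocycle `c`: every `x ≠ 1` commutes with some `g` whose lift to the
extension defined by `c` does not commute with that of `x`. -/
def IsNondegenerate [Monoid G] (c : G → G → M) : Prop :=
  ∀ x : G, x ≠ 1 → ∃ g : G, x * g = g * x ∧ c x g ≠ c g x

/-- A subgroup is isotropic with respect to the class of `c` if `c` restricts to a coboundary. -/
def IsIsotropic [Group G] [Group M] (c : G → G → M) (H : Subgroup G) : Prop :=
  IsTwoCoboundary fun a b : H => c a b

theorem IsTwoCocycle.one_left [Monoid G] [Mul M] [IsRightCancelMul M] {c : G → G → M}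
    (hc : IsTwoCocycle c) (x : G) : c 1 x = c 1 1 := by
  have h := hc 1 1 x
  simp only [one_mul] at h
  exact (mul_right_cancel h).symm

end Cocycles

/-- Projective representations with factor set `c`, valued in an arbitrary `K`-algebra `A` (the
classical case being `A = Module.End K V`). As `c` is not assumed normalized, `ρ 1` is a scalar
rather than `1`. -/
structure IsProjectiveRep {G K A : Type*} [Monoid G] [CommRing K] [Ring A] [Algebra K A]
    (c : G → G → Kˣ) (ρ : G → A) : Prop where
  map_one : ρ 1 = c 1 1 • (1 : A)
  map_mul (g h : G) : ρ g * ρ h = c g h • ρ (g * h)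

namespace IsProjectiveRep

section Algebra

variable {G K A B : Type*} [CommRing K] [Ring A] [Algebra K A] [Ring B] [Algebra K B]

theorem map_algHom [Monoid G] {c : G → G → Kˣ} {ρ : G → A} (hρ : IsProjectiveRep c ρ)
    (φ : A →ₐ[K] B) : IsProjectiveRep c fun g => φ (ρ g) where
  map_one := by rw [hρ.map_one, Units.smul_def, map_smul, _root_.map_one, Units.smul_def]
  map_mul g h := by rw [← _root_.map_mul, hρ.map_mul, Units.smul_def, map_smul, Units.smul_def]

theorem restrict [Group G] {c : G → G → Kˣ} {ρ : G → A} (hρ : IsProjectiveRep c ρ)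
    (H : Subgroup G) : IsProjectiveRep (fun a b : H => c a b) fun h : H => ρ h where
  map_one := hρ.map_one
  map_mul a b := hρ.map_mul a b

theorem isUnit [Group G] {c : G → G → Kˣ} {ρ : G → A} (hρ : IsProjectiveRep c ρ) (g : G) :
    IsUnit (ρ g) := by
  have mul_eq_smul_one {a b : G} (hab : a * b = 1) :
      ρ a * ρ b = (c a b * c 1 1) • (1 : A) := by
    rw [hρ.map_mul, hab, hρ.map_one, mul_smul]
  refine isUnit_iff_exists_and_exists.2
    ⟨⟨(c g g⁻¹ * c 1 1)⁻¹ • ρ g⁻¹, ?_⟩, ⟨(c g⁻¹ g * c 1 1)⁻¹ • ρ g⁻¹, ?_⟩⟩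
  · rw [mul_smul_comm, mul_eq_smul_one (mul_inv_cancel g), inv_smul_smul]
  · rw [smul_mul_assoc, mul_eq_smul_one (inv_mul_cancel g), inv_smul_smul]

theorem toSubmodule_adjoin_range [Monoid G] {c : G → G → Kˣ} {ρ : G → A}
    (hρ : IsProjectiveRep c ρ) :
    Subalgebra.toSubmodule (Algebra.adjoin K (Set.range ρ)) = Submodule.span K (Set.range ρ) := by
  have one_mem : (1 : A) ∈ Submodule.span K (Set.range ρ) := by
    rw [← inv_smul_smul (c 1 1) (1 : A), ← hρ.map_one]
    exact Submodule.smul_mem _ _ (Submodule.subset_span ⟨1, rfl⟩)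
  have span_mul_span_le : Submodule.span K (Set.range ρ) * Submodule.span K (Set.range ρ) ≤
      Submodule.span K (Set.range ρ) := by
    rw [Submodule.span_mul_span, Submodule.span_le]
    rintro _ ⟨_, ⟨g, rfl⟩, _, ⟨h, rfl⟩, rfl⟩
    simp only [hρ.map_mul]
    exact Submodule.smul_mem _ _ (Submodule.subset_span ⟨g * h, rfl⟩)
  refine Algebra.adjoin_eq_span_of_subset K fun x hx => ?_
  induction hx using Submonoid.closure_induction with
  | mem x hx => exact Submodule.subset_span hx
  | one => exact one_mem
  | mul x y _ _ hx hy => exact span_mul_span_le (Submodule.mul_mem_mul hx hy)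

theorem exists_monoidHom_of_isTwoCoboundary [Monoid G] {c : G → G → Kˣ} {ρ : G → A}
    (hρ : IsProjectiveRep c ρ) (hc : IsTwoCoboundary c) :
    ∃ (f : G → Kˣ) (π : G →* A), ∀ g, π g = f g • ρ g := by
  obtain ⟨f, hf⟩ := hc
  refine ⟨f⁻¹, { toFun g := f⁻¹ g • ρ g, map_one' := ?_, map_mul' g h := ?_ }, fun _ => rfl⟩
  · rw [hρ.map_one, hf, mul_one, mul_inv_cancel_right, Pi.inv_apply, inv_smul_smul]
  · rw [smul_mul_smul_comm, hρ.map_mul, hf, smul_smul]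
    congr 1
    simp only [Pi.inv_apply]
    rw [← mul_inv, inv_mul_cancel_left]

end Algebra

section Trace

variable {G K V : Type*} [Group G] [Field K] [AddCommGroup V] [Module K V]
  {c : G → G → Kˣ} {ρ : G → Module.End K V}

theorem trace_eq_zero (hρ : IsProjectiveRep c ρ) (hc : IsNondegenerate c) {x : G} (hx : x ≠ 1) :
    LinearMap.trace K V (ρ x) = 0 := by
  obtain ⟨g, hxg, hne⟩ := hc x hx
  obtain ⟨u, hu⟩ := hρ.isUnit g
  have skew_commute : c g x • (ρ x * ρ g) = c x g • (ρ g * ρ x) := by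
    rw [hρ.map_mul, hρ.map_mul, hxg, smul_comm]
  have conj_eq : c x g • (↑u * ρ x * ↑u⁻¹) = c g x • ρ x := by
    rw [hu, ← smul_mul_assoc, ← skew_commute, ← hu, smul_mul_assoc, Units.mul_inv_cancel_right]
  have trace_eq : (c x g : K) * LinearMap.trace K V (ρ x) = c g x * LinearMap.trace K V (ρ x) := by
    simpa only [Units.smul_def, map_smul, LinearMap.trace_conj, smul_eq_mul]
      using congrArg (LinearMap.trace K V) conj_eq
  exact (mul_eq_mul_right_iff.1 trace_eq).resolve_left fun h => hne (Units.ext h)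

variable [CharZero K] [FiniteDimensional K V]

theorem linearIndependent [Nontrivial V] (hρ : IsProjectiveRep c ρ) (hc : IsNondegenerate c) :
    LinearIndependent K ρ := by
  refine linearIndependent_iff'.2 fun s a hsum x hx => ?_
  have trace_mul_inv {g : G} (hg : g ≠ x) : LinearMap.trace K V (ρ g * ρ x⁻¹) = 0 := by
    rw [hρ.map_mul, Units.smul_def, map_smul,
      hρ.trace_eq_zero hc (mul_inv_eq_one.not.2 hg), smul_zero]
  have trace_mul_inv_self : LinearMap.trace K V (ρ x * ρ x⁻¹) ≠ 0 := by
    rw [hρ.map_mul, mul_inv_cancel, hρ.map_one, smul_smul, Units.smul_def, map_smul,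
      LinearMap.trace_one, smul_eq_mul]
    exact mul_ne_zero (Units.ne_zero _) (Nat.cast_ne_zero.2 Module.finrank_pos.ne')
  have trace_sum : ∑ g ∈ s, a g * LinearMap.trace K V (ρ g * ρ x⁻¹) = 0 := by
    simpa only [Finset.sum_mul, smul_mul_assoc, map_sum, map_smul, smul_eq_mul, zero_mul, map_zero]
      using congrArg (fun T => LinearMap.trace K V (T * ρ x⁻¹)) hsum
  rw [Finset.sum_eq_single_of_mem x hx fun g _ hg => by rw [trace_mul_inv hg, mul_zero]]
    at trace_sum
  exact (mul_eq_zero.1 trace_sum).resolve_right trace_mul_inv_self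

theorem card_eq_finrank_sq [Nontrivial V] (hρ : IsProjectiveRep c ρ) (hc : IsNondegenerate c)
    (hspan : Submodule.span K (Set.range ρ) = ⊤) : Nat.card G = Module.finrank K V ^ 2 := by
  rw [← Module.finrank_eq_nat_card_basis (Module.Basis.mk (hρ.linearIndependent hc) hspan.ge),
    Module.finrank_linearMap, sq]

end Trace

end IsProjectiveRep

theorem card_dvd_finrank_of_character_eq_zero {H K V : Type*} [Group H] [Finite H] [Field K]
    [CharZero K] [AddCommGroup V] [Module K V] [FiniteDimensional K V] (π : Representation K H V)
    (hπ : ∀ h ≠ 1, π.character h = 0) : Nat.card H ∣ Module.finrank K V := by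
  have := Fintype.ofFinite H
  have card_ne_zero : (Nat.card H : K) ≠ 0 := Nat.cast_ne_zero.2 Nat.card_pos.ne'
  have := invertibleOfNonzero card_ne_zero
  have sum_character : ∑ h, π.character h = Module.finrank K V := by
    rw [Fintype.sum_eq_single 1 hπ, Representation.char_one]
  have average := π.card_inv_mul_sum_char_eq_finrank
  rw [sum_character, inv_mul_eq_iff_eq_mul₀ card_ne_zero] at average
  exact ⟨_, by exact_mod_cast average⟩

theorem IsProjectiveRep.card_dvd_finrank_of_isIsotropic {G K V : Type*} [Group G] [Field K]
    [CharZero K] [AddCommGroup V] [Module K V] [FiniteDimensional K V] {c : G → G → Kˣ}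
    {ρ : G → Module.End K V} (hρ : IsProjectiveRep c ρ) (hc : IsNondegenerate c) {H : Subgroup G}
    [Finite H] (hH : IsIsotropic c H) : Nat.card H ∣ Module.finrank K V := by
  obtain ⟨f, π, hπ⟩ := (hρ.restrict H).exists_monoidHom_of_isTwoCoboundary hH
  refine card_dvd_finrank_of_character_eq_zero π fun h hne => ?_
  rw [Representation.character, hπ, Units.smul_def, map_smul,
    hρ.trace_eq_zero hc (OneMemClass.coe_eq_one.not.2 hne), smul_zero]

theorem lsmul_surjective_of_isSimpleModule (K A V : Type*) [Field K] [IsAlgClosed K] [Ring A]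
    [Algebra K A] [AddCommGroup V] [Module K V] [Module A V] [IsScalarTower K A V]
    [FiniteDimensional K V] [IsSimpleModule A V] :
    Function.Surjective (Algebra.lsmul K K V : A →ₐ[K] Module.End K V) := by
  intro T
  -- By Schur's lemma `End_A V = K`, so `T` lies in the bicommutant of `A`.
  let T' : Module.End (Module.End A V) V :=
    { T with
      map_smul' := fun φ v => by
        obtain ⟨a, rfl⟩ := (IsSimpleModule.algebraMap_end_bijective_of_isAlgClosed K).2 φ
        exact map_smul T a v }
  obtain ⟨s, hs⟩ := Module.Finite.fg_top (R := K) (M := V)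
  obtain ⟨a, ha⟩ := jacobson_density T' s
  exact ⟨a, LinearMap.ext_on hs fun v hv => (ha v hv).symm⟩

theorem exists_algHom_end_surjective (K A : Type*) [Field K] [IsAlgClosed K] [Ring A] [Algebra K A]
    [FiniteDimensional K A] [Nontrivial A] :
    ∃ (n : ℕ) (_ : NeZero n) (φ : A →ₐ[K] Module.End K (Fin n → K)), Function.Surjective φ := by
  obtain ⟨I, hI⟩ := Ideal.exists_maximal A
  have : IsSimpleModule A (A ⧸ I) := isSimpleModule_iff_isCoatom.2 hI.out
  have : Nontrivial (A ⧸ I) := IsSimpleModule.nontrivial A (A ⧸ I)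
  have : FiniteDimensional K (A ⧸ I) := .of_surjective (I.mkQ.restrictScalars K) I.mkQ_surjective
  let e := (Module.finBasis K (A ⧸ I)).equivFun.conjAlgEquiv K
  exact ⟨Module.finrank K (A ⧸ I), ⟨Module.finrank_pos.ne'⟩,
    e.toAlgHom.comp (Algebra.lsmul K K (A ⧸ I)),
    e.surjective.comp (lsmul_surjective_of_isSimpleModule K A (A ⧸ I))⟩

section TwistedGroupAlgebra

variable {G K : Type*} [Group G] [CommRing K]

/-- The regular projective representation with factor set `c`, on functions on `G`: it sends the
indicator function of `x` to `c g x` times the indicator function of `g * x`. -/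
def twistedRegular (c : G → G → Kˣ) (g : G) : Module.End K (G → K) where
  toFun φ x := c g (g⁻¹ * x) * φ (g⁻¹ * x)
  map_add' _ _ := funext fun _ => mul_add _ _ _
  map_smul' _ _ := funext fun _ => mul_left_comm _ _ _

theorem isProjectiveRep_twistedRegular {c : G → G → Kˣ} (hc : IsTwoCocycle c) :
    IsProjectiveRep c (twistedRegular c) where
  map_one := by
    ext1 φ
    funext x
    simp [twistedRegular, hc.one_left x, Units.smul_def]
  map_mul g h := by
    ext1 φ
    funext x
    have cocycle := congrArg Units.val (hc g h (h⁻¹ * (g⁻¹ * x)))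
    rw [mul_inv_cancel_left, Units.val_mul, Units.val_mul] at cocycle
    simp only [twistedRegular, Module.End.mul_apply, LinearMap.coe_mk, AddHom.coe_mk,
      LinearMap.smul_apply, Pi.smul_apply, Units.smul_def, smul_eq_mul, mul_inv_rev, mul_assoc]
    linear_combination -φ (h⁻¹ * (g⁻¹ * x)) * cocycle

/-- The twisted group algebra of `c`, realized as the algebra of operators generated by the
regular projective representation. -/
noncomputable def twistedGroupAlgebra (c : G → G → Kˣ) : Subalgebra K (Module.End K (G → K)) :=
  Algebra.adjoin K (Set.range (twistedRegular c))

namespace twistedGroupAlgebra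

/-- The standard generators of the twisted group algebra, indexed by `G`. -/
noncomputable def of (c : G → G → Kˣ) (g : G) : twistedGroupAlgebra c :=
  ⟨twistedRegular c g, Algebra.subset_adjoin ⟨g, rfl⟩⟩

theorem isProjectiveRep_of {c : G → G → Kˣ} (hc : IsTwoCocycle c) :
    IsProjectiveRep c (of c) where
  map_one := Subtype.ext (isProjectiveRep_twistedRegular hc).map_one
  map_mul g h := Subtype.ext ((isProjectiveRep_twistedRegular hc).map_mul g h)

theorem span_range_of {c : G → G → Kˣ} (hc : IsTwoCocycle c) :
    Submodule.span K (Set.range (of c)) = ⊤ := by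
  apply Submodule.map_injective_of_injective (f := (twistedGroupAlgebra c).val.toLinearMap)
    Subtype.val_injective
  rw [Submodule.map_span, ← Set.range_comp, Submodule.map_top]
  exact (isProjectiveRep_twistedRegular hc).toSubmodule_adjoin_range.symm.trans
    (Submodule.range_subtype _).symm

end twistedGroupAlgebra

end TwistedGroupAlgebra

theorem isotropic_order_divides_sqrt_general {G K : Type*} [Group G] [Finite G] [Field K]
    [IsAlgClosed K] [CharZero K] {c : G → G → Kˣ} (hc : IsTwoCocycle c) (hnd : IsNondegenerate c)
    {H : Subgroup G} (hH : IsIsotropic c H) :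
    ∃ n : ℕ, Nat.card G = n ^ 2 ∧ Nat.card H ∣ n := by
  obtain ⟨n, _, φ, hφ⟩ := exists_algHom_end_surjective K (twistedGroupAlgebra c)
  have hρ := (twistedGroupAlgebra.isProjectiveRep_of hc).map_algHom φ
  have hspan : Submodule.span K (Set.range fun g => φ (twistedGroupAlgebra.of c g)) = ⊤ := by
    rw [Set.range_comp' φ, ← AlgHom.coe_toLinearMap, ← Submodule.map_span,
      twistedGroupAlgebra.span_range_of hc, Submodule.map_top]
    exact LinearMap.range_eq_top.2 hφ
  have card_G := hρ.card_eq_finrank_sq hnd hspan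
  have card_H := hρ.card_dvd_finrank_of_isIsotropic hnd hH
  rw [Module.finrank_fin_fun] at card_G card_H
  exact ⟨n, card_G, card_H⟩

/-- If `c ∈ Z²(G, ℂ*)` is non-degenerate, then any subgroup `H < G`
isotropic with respect to `[c]` (restriction is a coboundary) has order dividing
`√|G|` (in particular `|G|` is a perfect square). -/
theorem isotropic_order_divides_sqrt
    {G : Type*} [Group G] [Fintype G]
    (c : G → G → ℂˣ)
    (hc : ∀ g h k : G, c g h * c (g * h) k = c h k * c g (h * k))
    (hnd : ∀ x : G, x ≠ 1 → ∃ g : G, x * g = g * x ∧ c x g ≠ c g x)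
    (H : Subgroup G)
    (hres : ∃ f : H → ℂˣ, ∀ a b : H, c (a : G) (b : G) = f a * f b * (f (a * b))⁻¹) :
    ∃ n : ℕ, Fintype.card G = n ^ 2 ∧ Nat.card H ∣ n := by
  rw [Fintype.card_eq_nat_card]
  exact isotropic_order_divides_sqrt_general hc hnd hres
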